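/- There exist constants C > 0 and h0 ∈ (0,1] such that for every h ∈ (0, h0], the smooth deformation u^h(x', x3) = y0(x') + x3 b0(x') + (x3²/2) d0(x'), restricted to Ω^h = Ω × (−h/2, h/2), satisfies E^h(u^h) ≤ C h⁴; in particular the infimum of E^h over all deformations u ∈ W^{1,2}(Ω^h, ℝ³) is at most C h⁴. -/

import Mathlib

noncomputable section

open scoped Topology ENNReal
open Filter MeasureTheory

/-- Points of the midplate `Ω ⊆ ℝ²`. -/
abbrev E2 : Type := Fin 2 → ℝ
/-- Vectors in `ℝ³`. -/
abbrev V3 : Type := Fin 3 → ℝ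
/-- `3×3` real arrays. -/
abbrev M3 : Type := Fin 3 → Fin 3 → ℝ
/-- `2×2` real arrays. -/
abbrev M2 : Type := Fin 2 → Fin 2 → ℝ

/-- Partial derivative `∂ᵢ` of a scalar field on `ℝ²`. -/
def pd2 (i : Fin 2) (f : E2 → ℝ) (x : E2) : ℝ := fderiv ℝ f x (Pi.single i 1)

/-- Partial derivative `∂ᵢ` of an `ℝ³`-valued field on `ℝ²`. -/
def pdv (i : Fin 2) (f : E2 → V3) (x : E2) : V3 := fderiv ℝ f x (Pi.single i 1)

/-- Euclidean inner product on `ℝ³`. -/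
def dot3 (u v : V3) : ℝ := ∑ k, u k * v k

/-- Matrix product of `3×3` arrays. -/
def mmul (A B : M3) : M3 := fun i j => ∑ k, A i k * B k j

/-- Transpose of a `3×3` array. -/
def transp (A : M3) : M3 := fun i j => A j i

/-- The identity `3×3` array. -/
def idm : M3 := fun i j => if i = j then 1 else 0

/-- Frobenius norm of a `3×3` array. -/
def fnorm (A : M3) : ℝ := Real.sqrt (∑ i, ∑ j, (A i j) ^ 2)

/-- Symmetry of a `3×3` array. -/
def SymM (A : M3) : Prop := ∀ i j, A i j = A j i

/-- Positive definiteness of a `3×3` array. -/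
def PosDefM (A : M3) : Prop := ∀ v : V3, v ≠ 0 → 0 < ∑ i, ∑ j, v i * A i j * v j

/-- The special orthogonal group `SO(3)`. -/
def SO3 : Set M3 := {R | mmul (transp R) R = idm ∧ (Matrix.of R).det = 1}

/-- Entries of the inverse of a `3×3` array. -/
def minv (A : M3) : M3 := fun i j => (Matrix.of A)⁻¹ i j

/-- The columns `∂₁y₀, ∂₂y₀, b₀` of the matrix `Q₀`. -/
def Qcol (y0 b0 : E2 → V3) (x : E2) : Fin 3 → V3 := ![pdv 0 y0 x, pdv 1 y0 x, b0 x]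

/-- The determinant of `Q₀`. -/
def Qdet (y0 b0 : E2 → V3) (x : E2) : ℝ := (Matrix.of fun a j => Qcol y0 b0 x j a).det

/-- Partial derivatives `∂₁, ∂₂, ∂₃` of an `x₃`-independent scalar field (so `∂₃ = 0`). -/
def pd3 (k : Fin 3) (f : E2 → ℝ) (x : E2) : ℝ :=
  if h : (k : ℕ) < 2 then pd2 ⟨(k : ℕ), h⟩ f x else 0

/-- Christoffel symbols `Γ^n_{kl}` of the (`x₃`-independent) metric `G`. -/
def Gamma (G : E2 → M3) (n k l : Fin 3) (x : E2) : ℝ :=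
  (1 / 2) * ∑ s, minv (G x) n s *
    (pd3 k (fun y => G y s l) x + pd3 l (fun y => G y s k) x - pd3 s (fun y => G y k l) x)

/-- Covariant Riemann curvatures `R_{iklm}` of the (`x₃`-independent) metric `G`;
indices are `0`-based, so e.g. `R_{1313} = Riem G 0 2 0 2`. -/
def Riem (G : E2 → M3) (i k l m : Fin 3) (x : E2) : ℝ :=
  (1 / 2) * (pd3 k (fun y => pd3 l (fun z => G z i m) y) x
           + pd3 i (fun y => pd3 m (fun z => G z k l) y) x
           - pd3 k (fun y => pd3 m (fun z => G z i l) y) x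
           - pd3 i (fun y => pd3 l (fun z => G z k m) y) x)
    + ∑ n, ∑ p, G x n p *
        (Gamma G n k l x * Gamma G p i m x - Gamma G n k m x * Gamma G p i l x)

/-- The deformation gradient `∇u = [∂₁u | ∂₂u | ∂₃u]` of `u : Ω^h → ℝ³`. -/
def gradu (u : E2 × ℝ → V3) (x : E2 × ℝ) : M3 :=
  fun a j => ![fderiv ℝ u x (Pi.single 0 1, 0),
               fderiv ℝ u x (Pi.single 1 1, 0),
               fderiv ℝ u x (0, 1)] j a

/-- The elastic energy `E^h(u) = (1/h) ∫_{Ω × (-h/2,h/2)} W(∇u A⁻¹)`. -/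
def Eh (W : M3 → ℝ≥0∞) (A : E2 → M3) (Ω : Set E2) (h : ℝ) (u : E2 × ℝ → V3) : ℝ≥0∞ :=
  (ENNReal.ofReal h)⁻¹ *
    ∫⁻ x in Ω ×ˢ Set.Ioo (-(h / 2)) (h / 2), W (mmul (gradu u x) (minv (A x.1)))

/-- Symmetric part of a `3×3` array. -/
def symM (A : M3) : M3 := fun i j => (A i j + A j i) / 2
/-- Symmetric part of a `2×2` array. -/
def sym2M (A : M2) : M2 := fun i j => (A i j + A j i) / 2
/-- `F₂*`: the `3×3` array with principal `2×2` minor `F₂` and all other entries `0`. -/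
def put (F2 : M2) : M3 :=
  fun i j => if h : (i : ℕ) < 2 ∧ (j : ℕ) < 2 then F2 ⟨i, h.1⟩ ⟨j, h.2⟩ else 0
/-- The tensor product `c ⊗ e₃`. -/
def tene3 (c : V3) : M3 := fun i j => if j = 2 then c i else 0
/-- Cross product in `ℝ³`. -/
def cross (u v : V3) : V3 :=
  ![u 1 * v 2 - u 2 * v 1, u 2 * v 0 - u 0 * v 2, u 0 * v 1 - u 1 * v 0]
/-- The quadratic form `Q₃(F) = D²W(Id₃)(F,F)`, for a density `w`. -/
def Q3d (w : M3 → ℝ) (F : M3) : ℝ := fderiv ℝ (fun P => fderiv ℝ w P F) idm F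
/-- The reduced quadratic form `Q_{2,A}(x', F₂)`:
the infimum of `Q₃(A⁻¹ F̃ A⁻¹)` over all `F̃` whose principal `2×2` minor is `F₂`. -/
def QA (w : M3 → ℝ) (A : E2 → M3) (x : E2) (F2 : M2) : ℝ :=
  ⨅ Ft : {Ft : M3 // ∀ i j : Fin 2, Ft i.castSucc j.castSucc = F2 i j},
    Q3d w (mmul (minv (A x)) (mmul Ft.1 (minv (A x))))

/-!
With `Q₀ = [∂₁y₀ | ∂₂y₀ | b₀]`, `B = [∂₁b₀ | ∂₂b₀ | d₀]`, `D = [∂₁d₀ | ∂₂d₀ | 0]`, the gradient of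
the ansatz is `Q₀ + x₃ B + (x₃²/2) D`. Since `A² = G = Q₀ᵀ Q₀`, the matrix `R₀ = Q₀ A⁻¹` is a
rotation, and `∇u^h A⁻¹ = R₀ (1 + x₃ S + (x₃²/2) T)` with `S = A⁻¹ (Q₀ᵀ B) A⁻¹`. The condition
`(sym0)` on the tangential block and the choice of `d₀` on the remaining entries say exactly that
`Q₀ᵀ B`, hence `S`, is skew-symmetric. The first-order term is therefore an infinitesimal rotation,
and a rotation brings `∇u^h A⁻¹` to within `O(x₃²)` of the identity. There the nonnegative `C²`
density `W` has a minimum with value zero, so by frame indifference `W(∇u^h A⁻¹) = O(x₃⁴)`,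
uniformly on the plate.
-/

open scoped Matrix.Norms.L2Operator
open Bornology

theorem isBounded_fderiv_image_interior_of_contDiffOn {E F : Type*} [NormedAddCommGroup E]
    [NormedSpace ℝ E] [NormedAddCommGroup F] [NormedSpace ℝ F] {K : Set E} (hK : IsCompact K)
    {f : E → F} (hf : ContDiffOn ℝ 1 f K) : IsBounded (fderiv ℝ f '' interior K) := by
  suffices h : IsBounded (fderiv ℝ f '' (K ∩ interior K)) by
    rwa [Set.inter_eq_self_of_subset_right interior_subset] at h
  refine hK.induction_on (p := fun s => IsBounded (fderiv ℝ f '' (s ∩ interior K))) (by simp)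
    (fun s t hst ht => ht.subset (by gcongr)) (fun s t hs ht => ?_) fun x hx => ?_
  · rw [Set.union_inter_distrib_right, Set.image_union]
    exact hs.union ht
  · obtain ⟨u, hu, -, -, f', hf', hcont⟩ :=
      (contDiffWithinAt_succ_iff_hasFDerivWithinAt' (n := 0) (by simp)).mp
        (by simpa using hf x hx)
    rw [Set.insert_eq_of_mem hx] at hu
    obtain ⟨v, hv, hbdd⟩ := Metric.exists_isBounded_image_of_tendsto hcont.continuousWithinAt
    refine ⟨u ∩ v, inter_mem hu hv, hbdd.subset ?_⟩
    rintro _ ⟨y, ⟨⟨hyu, hyv⟩, hyK⟩, rfl⟩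
    have hy : HasFDerivAt f (f' y) y := (hf' y hyu).hasFDerivAt (mem_interior_iff_mem_nhds.mp hyK)
    exact ⟨y, hyv, hy.fderiv.symm⟩

theorem isBigO_sub_norm_sq_of_fderiv_eq_zero {E F : Type*} [NormedAddCommGroup E]
    [NormedSpace ℝ E] [NormedAddCommGroup F] [NormedSpace ℝ F] {f : E → F} {a : E}
    (hf : ContDiffAt ℝ 2 f a) (ha : fderiv ℝ f a = 0) :
    (fun x => f x - f a) =O[𝓝 a] fun x => ‖x - a‖ ^ 2 := by
  have hdiff : ∀ᶠ x in 𝓝 a, DifferentiableAt ℝ f x :=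
    (hf.eventually (by simp)).mono fun x hx => hx.differentiableAt (by simp)
  have hfderiv : fderiv ℝ f =O[𝓝 a] (‖· - a‖ ^ (1 : ℝ)) := by
    have h : DifferentiableAt ℝ (fderiv ℝ f) a :=
      (hf.fderiv_right (m := 1) (by norm_num)).differentiableAt (by simp)
    simpa [ha] using h.isBigO_sub.norm_right
  have h := sub_isBigO_norm_rpow_add_one_of_fderiv zero_le_one hdiff hfderiv
  norm_num at h
  exact h

section Matrix

variable {n : Type*} [Fintype n] [DecidableEq n]

/-- The Cayley transform `(1 + K)(1 - K)⁻¹` of a matrix, which sends skew-symmetric matrices to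
rotations. -/
def cayleyTransform (K : Matrix n n ℝ) : Matrix n n ℝ := (1 + K) * (1 - K)⁻¹

variable {K Q A B D S : Matrix n n ℝ}

theorem isUnit_one_sub_of_mem_skewAdjoint (hK : K ∈ skewAdjoint (Matrix n n ℝ)) :
    IsUnit (1 - K) := by
  have hcomm : Commute (1 - K) (1 + K) := by
    rw [commute_iff_eq]
    noncomm_ring
  have hpos : ((1 - K) * (1 + K)).PosDef := by
    have h : (1 - K) * (1 + K) = 1 + star K * K := by
      rw [skewAdjoint.mem_iff.mp hK]
      noncomm_ring
    rw [h]
    exact Matrix.PosDef.one.add_posSemidef (Matrix.posSemidef_conjTranspose_mul_self K)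
  exact (hcomm.isUnit_mul_iff.mp hpos.isUnit).1

theorem cayleyTransform_mem_specialOrthogonalGroup (hK : K ∈ skewAdjoint (Matrix n n ℝ)) :
    cayleyTransform K ∈ Matrix.specialOrthogonalGroup n ℝ := by
  have hstar : star (1 - K) = 1 + K := by
    rw [star_sub, star_one, skewAdjoint.mem_iff.mp hK, sub_neg_eq_add]
  have hdet : (1 + K).det = (1 - K).det := by
    rw [← hstar, Matrix.star_eq_conjTranspose, Matrix.det_conjTranspose, star_trivial]
  have hu : IsUnit (1 - K).det := (Matrix.isUnit_iff_isUnit_det _).mp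
    (isUnit_one_sub_of_mem_skewAdjoint hK)
  have hcomm : (1 - K) * (1 + K) = (1 + K) * (1 - K) := by noncomm_ring
  have hstarC : star (cayleyTransform K) = (1 + K)⁻¹ * (1 - K) := by
    rw [cayleyTransform, star_mul, Matrix.star_eq_conjTranspose (1 - K)⁻¹,
      Matrix.conjTranspose_nonsing_inv, ← Matrix.star_eq_conjTranspose, hstar, ← hstar, star_star]
  rw [Matrix.mem_specialOrthogonalGroup_iff, Matrix.mem_orthogonalGroup_iff']
  constructor
  · calc star (cayleyTransform K) * cayleyTransform K
        = (1 + K)⁻¹ * ((1 - K) * (1 + K)) * (1 - K)⁻¹ := by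
          rw [hstarC, cayleyTransform]
          simp only [mul_assoc]
      _ = (1 + K)⁻¹ * (1 + K) * ((1 - K) * (1 - K)⁻¹) := by
          simp only [hcomm, mul_assoc]
      _ = 1 := by
          rw [Matrix.nonsing_inv_mul _ (hdet ▸ hu), Matrix.mul_nonsing_inv _ hu, one_mul]
  · rw [cayleyTransform, Matrix.det_mul, hdet, ← Matrix.det_mul, Matrix.mul_nonsing_inv _ hu,
      Matrix.det_one]

theorem cayleyTransform_eq_one_add_add (hK : IsUnit (1 - K)) :
    cayleyTransform K = 1 + 2 • K + K * K * (1 + cayleyTransform K) := by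
  have hmul : cayleyTransform K * (1 - K) = 1 + K := by
    rw [cayleyTransform, mul_assoc,
      Matrix.nonsing_inv_mul _ ((Matrix.isUnit_iff_isUnit_det _).mp hK), mul_one]
  refine hK.mul_right_cancel ?_
  calc cayleyTransform K * (1 - K) = (1 + 2 • K + K * K) * (1 - K) + K * K * (1 + K) := by
        rw [hmul]
        noncomm_ring
    _ = (1 + 2 • K + K * K * (1 + cayleyTransform K)) * (1 - K) := by
        rw [← hmul]
        noncomm_ring

-- The rotation undoing the skew first-order term is the inverse of the Cayley transform of `tS/2`.
theorem exists_rotation_norm_mul_sub_one_le (hS : S ∈ skewAdjoint (Matrix n n ℝ))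
    (T : Matrix n n ℝ) (t : ℝ) : ∃ R ∈ Matrix.specialOrthogonalGroup n ℝ,
      ‖R * (1 + t • S + (t ^ 2 / 2) • T) - 1‖ ≤ t ^ 2 / 2 * (‖S‖ ^ 2 + ‖T‖) := by
  have hK : (t / 2) • S ∈ skewAdjoint (Matrix n n ℝ) := skewAdjoint.smul_mem _ hS
  set C := cayleyTransform ((t / 2) • S) with hC
  have hCmem : C ∈ Matrix.specialOrthogonalGroup n ℝ :=
    cayleyTransform_mem_specialOrthogonalGroup hK
  have hCunit : C ∈ unitary (Matrix n n ℝ) := hCmem.1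
  have hexpand : C = 1 + t • S + (t ^ 2 / 4) • (S * S * (1 + C)) := by
    conv_lhs => rw [hC, cayleyTransform_eq_one_add_add (isUnit_one_sub_of_mem_skewAdjoint hK), ← hC]
    simp only [Matrix.smul_mul, Matrix.mul_smul]
    module
  have hremainder : 1 + t • S + (t ^ 2 / 2) • T - C =
      (t ^ 2 / 2) • T - (t ^ 2 / 4) • (S * S * (1 + C)) := by
    nth_rw 1 [hexpand]
    abel
  have hSSC : ‖S * S * (1 + C)‖ ≤ 2 * ‖S‖ ^ 2 :=
    calc ‖S * S * (1 + C)‖ ≤ ‖S * S‖ + ‖S * S * C‖ := by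
          rw [mul_add, mul_one]
          exact norm_add_le _ _
      _ = 2 * ‖S * S‖ := by rw [CStarRing.norm_mul_mem_unitary _ hCunit, two_mul]
      _ ≤ 2 * ‖S‖ ^ 2 := by grw [norm_mul_le, sq]
  refine ⟨star C, (star (⟨C, hCmem⟩ : Matrix.specialOrthogonalGroup n ℝ)).2, ?_⟩
  calc ‖star C * (1 + t • S + (t ^ 2 / 2) • T) - 1‖
      = ‖(t ^ 2 / 2) • T - (t ^ 2 / 4) • (S * S * (1 + C))‖ := by
        rw [← hremainder, ← CStarRing.norm_mem_unitary_mul (_ - C) (Unitary.star_mem hCunit),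
          mul_sub, Unitary.star_mul_self_of_mem hCunit]
    _ ≤ t ^ 2 / 2 * ‖T‖ + t ^ 2 / 4 * ‖S * S * (1 + C)‖ := by
        refine (norm_sub_le _ _).trans_eq ?_
        rw [norm_smul, norm_smul, Real.norm_of_nonneg (by positivity),
          Real.norm_of_nonneg (by positivity)]
    _ ≤ t ^ 2 / 2 * ‖T‖ + t ^ 2 / 4 * (2 * ‖S‖ ^ 2) := by grw [hSSC]
    _ = t ^ 2 / 2 * (‖S‖ ^ 2 + ‖T‖) := by ring

theorem mul_inv_mem_specialOrthogonalGroup (hA : A.PosDef) (hAQ : A * A = star Q * Q)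
    (hQ : 0 < Q.det) : Q * A⁻¹ ∈ Matrix.specialOrthogonalGroup n ℝ := by
  have hu : IsUnit A.det := (Matrix.isUnit_iff_isUnit_det _).mp hA.isUnit
  have hdet : Q.det = A.det := by
    have h := congrArg Matrix.det hAQ
    rw [Matrix.det_mul, Matrix.det_mul, Matrix.star_eq_conjTranspose, Matrix.det_conjTranspose,
      star_trivial] at h
    exact ((mul_self_inj hA.det_pos.le hQ.le).mp h).symm
  have hinv : star A⁻¹ = A⁻¹ := hA.isHermitian.inv
  rw [Matrix.mem_specialOrthogonalGroup_iff, Matrix.mem_orthogonalGroup_iff']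
  constructor
  · calc star (Q * A⁻¹) * (Q * A⁻¹) = A⁻¹ * (star Q * Q) * A⁻¹ := by
          simp only [star_mul, hinv, mul_assoc]
      _ = A⁻¹ * A * (A * A⁻¹) := by simp only [← hAQ, mul_assoc]
      _ = 1 := by rw [Matrix.nonsing_inv_mul _ hu, Matrix.mul_nonsing_inv _ hu, one_mul]
  · rw [Matrix.det_mul, hdet, ← Matrix.det_mul, Matrix.mul_nonsing_inv _ hu, Matrix.det_one]

theorem exists_rotation_norm_mul_frame_sub_one_le (hA : A.PosDef) (hAQ : A * A = star Q * Q)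
    (hQ : 0 < Q.det) (hQB : star Q * B ∈ skewAdjoint (Matrix n n ℝ)) (t : ℝ) :
    ∃ R ∈ Matrix.specialOrthogonalGroup n ℝ,
      ‖R * ((Q + t • B + (t ^ 2 / 2) • D) * A⁻¹) - 1‖ ≤
        t ^ 2 / 2 * ((‖B‖ * ‖A⁻¹‖) ^ 2 + ‖D‖ * ‖A⁻¹‖) := by
  set R₀ := Q * A⁻¹ with hR₀
  have hR₀mem : R₀ ∈ Matrix.specialOrthogonalGroup n ℝ :=
    mul_inv_mem_specialOrthogonalGroup hA hAQ hQ
  have hR₀star : star R₀ ∈ unitary (Matrix n n ℝ) := Unitary.star_mem hR₀mem.1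
  have hS : star R₀ * (B * A⁻¹) ∈ skewAdjoint (Matrix n n ℝ) := by
    have hinv : star A⁻¹ = A⁻¹ := hA.isHermitian.inv
    have h : star R₀ * (B * A⁻¹) = A⁻¹ * (star Q * B) * star A⁻¹ := by
      simp only [hR₀, star_mul, hinv, mul_assoc]
    rw [h]
    exact skewAdjoint.conjugate hQB A⁻¹
  have hnorm (M : Matrix n n ℝ) : ‖star R₀ * (M * A⁻¹)‖ ≤ ‖M‖ * ‖A⁻¹‖ := by
    rw [CStarRing.norm_mem_unitary_mul _ hR₀star]
    exact norm_mul_le _ _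
  have hfactor : (Q + t • B + (t ^ 2 / 2) • D) * A⁻¹ =
      R₀ * (1 + t • (star R₀ * (B * A⁻¹)) + (t ^ 2 / 2) • (star R₀ * (D * A⁻¹))) := by
    simp only [mul_add, add_mul, mul_one, Matrix.mul_smul, Matrix.smul_mul, ← mul_assoc,
      Unitary.mul_star_self_of_mem hR₀mem.1, one_mul, ← hR₀]
  obtain ⟨R, hR, hle⟩ := exists_rotation_norm_mul_sub_one_le hS (star R₀ * (D * A⁻¹)) t
  refine ⟨R * star R₀,
    mul_mem hR (star (⟨R₀, hR₀mem⟩ : Matrix.specialOrthogonalGroup n ℝ)).2, ?_⟩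
  rw [hfactor, mul_assoc, ← mul_assoc (star R₀), Unitary.star_mul_self_of_mem hR₀mem.1, one_mul]
  grw [hle, hnorm B, hnorm D]

theorem isBounded_inv_image_of_mul_self {X : Type*} [TopologicalSpace X] {s : Set X}
    (hs : IsCompact s) {G A : X → Matrix n n ℝ} (hG : ContinuousOn G s)
    (hA : ∀ x ∈ s, (A x).IsHermitian) (hGunit : ∀ x ∈ s, IsUnit (G x).det)
    (hAG : ∀ x ∈ s, A x * A x = G x) : IsBounded ((fun x => (A x)⁻¹) '' s) := by
  have hcont : ContinuousOn (fun x => (G x)⁻¹) s := fun x hx =>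
    (continuousAt_matrix_inv (G x) (by
      rw [Ring.inverse_eq_inv']
      exact continuousAt_inv₀ (hGunit x hx).ne_zero)).comp_continuousWithinAt (hG x hx)
  obtain ⟨C, hC⟩ := hs.exists_bound_of_continuousOn hcont
  refine isBounded_iff_forall_norm_le.mpr ⟨√C, ?_⟩
  rintro _ ⟨x, hx, rfl⟩
  refine Real.le_sqrt_of_sq_le ?_
  have hinv : star (A x)⁻¹ = (A x)⁻¹ := (hA x hx).inv
  calc ‖(A x)⁻¹‖ ^ 2 = ‖star (A x)⁻¹ * (A x)⁻¹‖ := by rw [CStarRing.norm_star_mul_self, sq]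
    _ = ‖(G x)⁻¹‖ := by rw [hinv, ← Matrix.mul_inv_rev, hAG x hx]
    _ ≤ C := hC x hx

end Matrix

theorem of_mmul (A B : M3) : Matrix.of (mmul A B) = Matrix.of A * Matrix.of B := rfl

theorem of_minv (A : M3) : Matrix.of (minv A) = (Matrix.of A)⁻¹ := rfl

theorem of_idm : Matrix.of idm = 1 := rfl

theorem mem_SO3_iff {R : M3} :
    R ∈ SO3 ↔ Matrix.of R ∈ Matrix.specialOrthogonalGroup (Fin 3) ℝ := by
  rw [Matrix.mem_specialOrthogonalGroup_iff, Matrix.mem_orthogonalGroup_iff']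
  rfl

theorem posDef_of {A : M3} (hs : SymM A) (hp : PosDefM A) : (Matrix.of A).PosDef := by
  refine Matrix.PosDef.of_dotProduct_mulVec_pos (Matrix.ext fun i j => hs j i) fun v hv => ?_
  simpa only [dotProduct, Matrix.mulVec, Finset.mul_sum, star_trivial, Matrix.of_apply, mul_assoc]
    using hp v hv

section Density

variable {W : M3 → ℝ≥0∞} {Wr : M3 → ℝ}

theorem isClosed_SO3 : IsClosed SO3 := by
  have hmul : Continuous fun R : M3 => mmul (transp R) R := by
    unfold mmul transp
    fun_prop
  have hdet : Continuous fun R : M3 => (Matrix.of R).det := Continuous.matrix_det continuous_id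
  exact (isClosed_eq hmul continuous_const).inter (isClosed_eq hdet continuous_const)

theorem idm_mem_SO3 : idm ∈ SO3 :=
  mem_SO3_iff.mpr (of_idm ▸ one_mem _)

theorem smul_notMem_SO3 {R : M3} (hR : R ∈ SO3) {s : ℝ} (hs : 1 < s) : s • R ∉ SO3 := by
  intro h
  have hdet : s ^ 3 * (Matrix.of R).det = 1 := by
    simpa using (Matrix.det_smul (Matrix.of R) s).symm.trans h.2
  rw [hR.2, mul_one] at hdet
  exact (one_lt_pow₀ hs three_ne_zero).ne' hdet

-- On `SO(3)` itself the growth bound is void; there nonnegativity is the limit along dilations.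
theorem nonneg_of_infDist_SO3_growth {c : ℝ} (hc : 0 < c)
    (hWgrow : ∀ F : M3, ENNReal.ofReal (c * Metric.infDist F SO3 ^ 2) ≤ W F) {U : Set M3}
    (hU : IsOpen U) (hWr : ContinuousOn Wr U) (hWrep : ∀ F ∈ U, W F = ENNReal.ofReal (Wr F))
    {F : M3} (hF : F ∈ U) : 0 ≤ Wr F := by
  have hoff : ∀ P ∈ U, P ∉ SO3 → 0 ≤ Wr P := fun P hP hPS => by
    have hdist : 0 < Metric.infDist P SO3 :=
      (isClosed_SO3.notMem_iff_infDist_pos ⟨_, idm_mem_SO3⟩).mp hPS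
    have hpos : 0 < ENNReal.ofReal (Wr P) :=
      (ENNReal.ofReal_pos.mpr (by positivity)).trans_le (hWrep P hP ▸ hWgrow P)
    exact (ENNReal.ofReal_pos.mp hpos).le
  by_cases hFS : F ∈ SO3
  · have hdil : Tendsto (fun s : ℝ => s • F) (𝓝[>] 1) (𝓝 F) := by
      have h : Continuous fun s : ℝ => s • F := by fun_prop
      simpa using (h.tendsto 1).mono_left nhdsWithin_le_nhds
    refine ge_of_tendsto ((hWr.continuousAt (hU.mem_nhds hF)).tendsto.comp hdil) ?_
    filter_upwards [hdil.eventually (hU.mem_nhds hF), self_mem_nhdsWithin] with s hsU hs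
    exact hoff _ hsU (smul_notMem_SO3 hFS hs)
  · exact hoff F hF hFS

theorem exists_le_sq_norm_sub_one (hW0 : W idm = 0)
    (hWrep : ∀ᶠ F in 𝓝 idm, W F = ENNReal.ofReal (Wr F)) (hWr : ContDiffAt ℝ 2 Wr idm)
    (hWr0 : ∀ᶠ F in 𝓝 idm, 0 ≤ Wr F) :
    ∃ L > (0 : ℝ), ∃ δ > (0 : ℝ), ∀ F : M3, ‖Matrix.of F - 1‖ ≤ δ →
      W F ≤ ENNReal.ofReal (L * ‖Matrix.of F - 1‖ ^ 2) := by
  have hWr1 : Wr idm = 0 :=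
    le_antisymm (ENNReal.ofReal_eq_zero.mp (hWrep.self_of_nhds ▸ hW0)) hWr0.self_of_nhds
  have hmin : IsLocalMin Wr idm := hWr0.mono fun F hF => hWr1 ▸ hF
  have hnorm : (fun F : M3 => F - idm) =O[𝓝 idm] fun F => Matrix.of F - 1 := by
    let Φ := LinearMap.toContinuousLinearMap
      (Matrix.ofLinearEquiv ℝ : M3 ≃ₗ[ℝ] Matrix (Fin 3) (Fin 3) ℝ).symm.toLinearMap
    exact Φ.isBigO_comp (fun F : M3 => Matrix.of F - 1) _
  have hbigO : Wr =O[𝓝 idm] fun F => ‖Matrix.of F - 1‖ ^ 2 := by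
    have h := isBigO_sub_norm_sq_of_fderiv_eq_zero hWr hmin.fderiv_eq_zero
    simp only [hWr1, sub_zero] at h
    exact h.trans (hnorm.norm_norm.pow 2)
  obtain ⟨L, hL, hbound⟩ := hbigO.exists_pos
  have hev : ∀ᶠ M : Matrix (Fin 3) (Fin 3) ℝ in 𝓝 1,
      W (Matrix.of.symm M) ≤ ENNReal.ofReal (L * ‖M - 1‖ ^ 2) := by
    change ∀ᶠ F : M3 in 𝓝 idm, W F ≤ ENNReal.ofReal (L * ‖Matrix.of F - 1‖ ^ 2)
    filter_upwards [hWrep, hbound.bound] with F hF hLF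
    rw [hF]
    refine ENNReal.ofReal_le_ofReal ((Real.le_norm_self _).trans (hLF.trans_eq ?_))
    rw [Real.norm_of_nonneg (by positivity)]
  obtain ⟨δ, hδ, hball⟩ := Metric.nhds_basis_closedBall.mem_iff.mp hev
  exact ⟨L, hL, δ, hδ, fun F hF => hball (mem_closedBall_iff_norm.mpr hF)⟩

end Density

section Energy

variable {W : M3 → ℝ≥0∞} {A : E2 → M3} {Ω : Set E2} {u : E2 × ℝ → V3}

theorem Eh_le_of_forall_le (hΩo : IsOpen Ω) (hΩb : IsBounded Ω) {h K : ℝ} (hh : 0 < h)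
    (hK : 0 ≤ K)
    (hW : ∀ x ∈ Ω, ∀ t ∈ Set.Ioo (-(h / 2)) (h / 2),
      W (mmul (gradu u (x, t)) (minv (A x))) ≤ ENNReal.ofReal K) :
    Eh W A Ω h u ≤ ENNReal.ofReal (K * volume.real Ω) := by
  have hmeas : MeasurableSet (Ω ×ˢ Set.Ioo (-(h / 2)) (h / 2)) :=
    (hΩo.prod isOpen_Ioo).measurableSet
  have hvol : volume (Ω ×ˢ Set.Ioo (-(h / 2)) (h / 2)) =
      ENNReal.ofReal (volume.real Ω) * ENNReal.ofReal h := by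
    rw [Measure.volume_eq_prod, Measure.prod_prod, Real.volume_Ioo,
      ofReal_measureReal hΩb.measure_lt_top.ne]
    ring_nf
  calc Eh W A Ω h u
      ≤ (ENNReal.ofReal h)⁻¹ *
        ∫⁻ _ in Ω ×ˢ Set.Ioo (-(h / 2)) (h / 2), ENNReal.ofReal K := by
        unfold Eh
        gcongr _ * ?_
        exact setLIntegral_mono' hmeas fun z hz => hW z.1 hz.1 z.2 hz.2
    _ = ENNReal.ofReal K * ENNReal.ofReal (volume.real Ω) *
        (ENNReal.ofReal h * (ENNReal.ofReal h)⁻¹) := by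
        rw [setLIntegral_const, hvol]
        ring
    _ = ENNReal.ofReal (K * volume.real Ω) := by
        rw [ENNReal.mul_inv_cancel (ENNReal.ofReal_pos.mpr hh).ne' ENNReal.ofReal_ne_top, mul_one,
          ENNReal.ofReal_mul hK]

theorem exists_Eh_le_of_rotation_close (hΩo : IsOpen Ω) (hΩb : IsBounded Ω)
    (hWfr : ∀ R ∈ SO3, ∀ F : M3, W (mmul R F) = W F) {L δ : ℝ} (hL : 0 < L) (hδ : 0 < δ)
    (hW : ∀ F : M3, ‖Matrix.of F - 1‖ ≤ δ → W F ≤ ENNReal.ofReal (L * ‖Matrix.of F - 1‖ ^ 2))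
    {κ : ℝ} (hκ : 0 < κ)
    (hu : ∀ x ∈ Ω, ∀ t : ℝ, ∃ R ∈ SO3,
      ‖Matrix.of (mmul R (mmul (gradu u (x, t)) (minv (A x)))) - 1‖ ≤ κ * t ^ 2) :
    ∃ C > (0 : ℝ), ∃ h0 ∈ Set.Ioc (0 : ℝ) 1, ∀ h ∈ Set.Ioc (0 : ℝ) h0,
      Eh W A Ω h u ≤ ENNReal.ofReal (C * h ^ 4) := by
  refine ⟨L * κ ^ 2 * (volume.real Ω + 1), by positivity, min 1 (δ / κ),
    ⟨lt_min one_pos (by positivity), min_le_left _ _⟩, fun h ⟨hh, hh0⟩ => ?_⟩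
  have hκh : κ * h ^ 2 ≤ δ :=
    calc κ * h ^ 2 ≤ κ * h := by
          gcongr
          exact pow_le_of_le_one hh.le (hh0.trans (min_le_left _ _)) two_ne_zero
      _ ≤ κ * (δ / κ) := by
          gcongr
          exact hh0.trans (min_le_right _ _)
      _ = δ := mul_div_cancel₀ δ hκ.ne'
  refine (Eh_le_of_forall_le (K := L * (κ * h ^ 2) ^ 2) hΩo hΩb hh (by positivity)
    fun x hx t ht => ?_).trans (ENNReal.ofReal_le_ofReal ?_)
  · obtain ⟨R, hR, hle⟩ := hu x hx t
    have ht2 : t ^ 2 ≤ h ^ 2 := sq_le_sq' (by linarith [ht.1]) (by linarith [ht.2])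
    have hle' : ‖Matrix.of (mmul R (mmul (gradu u (x, t)) (minv (A x)))) - 1‖ ≤ κ * h ^ 2 :=
      hle.trans (by gcongr)
    rw [← hWfr R hR]
    refine (hW _ (hle'.trans hκh)).trans (ENNReal.ofReal_le_ofReal ?_)
    gcongr
  · calc L * (κ * h ^ 2) ^ 2 * volume.real Ω ≤ L * (κ * h ^ 2) ^ 2 * (volume.real Ω + 1) := by
          gcongr
          linarith
      _ = L * κ ^ 2 * (volume.real Ω + 1) * h ^ 4 := by ring

end Energy

section Plate

variable {f f' v v' y0 b0 d0 : E2 → V3} {x : E2} {Ω : Set E2}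

/-- The matrix field `[∂₁f | ∂₂f | v]`. With `(f, v) = (y₀, b₀)`, `(b₀, d₀)` and `(d₀, 0)` it gives
`Q₀` and the first- and second-order coefficients in `x₃` of the deformation gradient. -/
def columnFrame (f v : E2 → V3) (x : E2) : Matrix (Fin 3) (Fin 3) ℝ :=
  (Matrix.of (Qcol f v x)).transpose

/-- The second-order ansatz `y₀ + x₃ b₀ + (x₃²/2) d₀` for the deformation of the plate. -/
def plateDeformation (y0 b0 d0 : E2 → V3) : E2 × ℝ → V3 := fun z a =>
  y0 z.1 a + z.2 * b0 z.1 a + z.2 ^ 2 / 2 * d0 z.1 a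

theorem star_columnFrame_mul_columnFrame_apply (i j : Fin 3) :
    (star (columnFrame f v x) * columnFrame f' v' x) i j =
      dot3 (Qcol f v x i) (Qcol f' v' x j) := rfl

theorem det_columnFrame : (columnFrame f v x).det = Qdet f v x := rfl

theorem Qcol_castSucc (i : Fin 2) : Qcol f v x i.castSucc = pdv i f x := by
  fin_cases i <;> rfl

theorem Qcol_last : Qcol f v x (Fin.last 2) = v x := rfl

theorem dot3_comm (u w : V3) : dot3 u w = dot3 w u := dotProduct_comm u w

theorem star_columnFrame_mul_columnFrame_mem_skewAdjoint
    (hsym0 : ∀ i j : Fin 2,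
      dot3 (pdv i y0 x) (pdv j b0 x) + dot3 (pdv j y0 x) (pdv i b0 x) = 0)
    (hd0 : ∀ i : Fin 2, dot3 (Qcol y0 b0 x i.castSucc) (d0 x) = - dot3 (pdv i b0 x) (b0 x))
    (hd0' : dot3 (Qcol y0 b0 x 2) (d0 x) = 0) :
    star (columnFrame y0 b0 x) * columnFrame b0 d0 x ∈
      skewAdjoint (Matrix (Fin 3) (Fin 3) ℝ) := by
  suffices h : ∀ i j : Fin 3, dot3 (Qcol y0 b0 x j) (Qcol b0 d0 x i) =
      -dot3 (Qcol y0 b0 x i) (Qcol b0 d0 x j) from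
    skewAdjoint.mem_iff.mpr (Matrix.ext h)
  have hlast : dot3 (b0 x) (d0 x) = 0 := hd0'
  simp only [Qcol_castSucc] at hd0
  refine Fin.lastCases (Fin.lastCases ?_ fun j => ?_) fun i => Fin.lastCases ?_ fun j => ?_ <;>
    simp only [Qcol_castSucc, Qcol_last]
  · rw [hlast, neg_zero]
  · rw [hd0 j, dot3_comm]
  · rw [hd0 i, neg_neg, dot3_comm]
  · exact eq_neg_of_add_eq_zero_left (hsym0 j i)

theorem isBounded_columnFrame_image (hΩo : IsOpen Ω) (hΩb : IsBounded Ω)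
    (hf : ContDiffOn ℝ 1 f (closure Ω)) (hv : ContinuousOn v (closure Ω)) :
    IsBounded (columnFrame f v '' Ω) := by
  have hfderiv : IsBounded (fderiv ℝ f '' Ω) :=
    (isBounded_fderiv_image_interior_of_contDiffOn hΩb.isCompact_closure hf).subset
      (Set.image_mono hΩo.subset_interior_closure)
  have hpdv (i : Fin 2) : IsBounded (pdv i f '' Ω) := by
    have h := (ContinuousLinearMap.apply ℝ V3 (Pi.single i 1 : E2)).lipschitz.isBounded_image
      hfderiv
    rwa [Set.image_image] at h
  have hvbdd : IsBounded (v '' Ω) :=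
    (hΩb.isCompact_closure.image_of_continuousOn hv).isBounded.subset
      (Set.image_mono subset_closure)
  have hcol : IsBounded (Qcol f v '' Ω) := by
    rw [← forall_isBounded_image_eval_iff]
    refine Fin.lastCases ?_ fun i => ?_ <;> rw [Set.image_image]
    · exact hvbdd
    · simpa only [Function.eval, Qcol_castSucc] using hpdv i
  have h := (LinearMap.toContinuousLinearMap
    (Matrix.ofLinearEquiv ℝ ≪≫ₗ Matrix.transposeLinearEquiv (Fin 3) (Fin 3) ℝ ℝ
      : M3 ≃ₗ[ℝ] Matrix (Fin 3) (Fin 3) ℝ).toLinearMap).lipschitz.isBounded_image hcol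
  rwa [Set.image_image] at h

theorem of_gradu_plateDeformation (t : ℝ) (hy : DifferentiableAt ℝ y0 x)
    (hb : DifferentiableAt ℝ b0 x) (hd : DifferentiableAt ℝ d0 x) :
    Matrix.of (gradu (plateDeformation y0 b0 d0) (x, t)) =
      columnFrame y0 b0 x + t • columnFrame b0 d0 x + (t ^ 2 / 2) • columnFrame d0 0 x := by
  have hfst : HasFDerivAt Prod.fst (ContinuousLinearMap.fst ℝ E2 ℝ) (x, t) := hasFDerivAt_fst
  have hsnd : HasFDerivAt Prod.snd (ContinuousLinearMap.snd ℝ E2 ℝ) (x, t) := hasFDerivAt_snd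
  have hsq : HasFDerivAt (fun z : E2 × ℝ => z.2 ^ 2 / 2)
      (t • ContinuousLinearMap.snd ℝ E2 ℝ) (x, t) := by
    have h : HasDerivAt (fun s : ℝ => s ^ 2 / 2) t t := by
      simpa using (hasDerivAt_pow 2 t).div_const 2
    exact h.comp_hasFDerivAt (x, t) hsnd
  have hu : fderiv ℝ (plateDeformation y0 b0 d0) (x, t) = _ :=
    (((hy.hasFDerivAt.comp (x, t) hfst).add (hsnd.smul (hb.hasFDerivAt.comp (x, t) hfst))).add
      (hsq.smul (hd.hasFDerivAt.comp (x, t) hfst))).fderiv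
  ext a j
  simp only [Matrix.add_apply, Matrix.smul_apply, Matrix.of_apply, gradu, hu]
  fin_cases j <;> simp [columnFrame, Qcol, pdv]

theorem isBounded_inv_image_of_mmul_self {G A : E2 → M3} (hΩb : IsBounded Ω)
    (hG : ContinuousOn G (closure Ω))
    (hA : ∀ x ∈ closure Ω, SymM (A x) ∧ PosDefM (A x) ∧ mmul (A x) (A x) = G x) :
    IsBounded ((fun x => (Matrix.of (A x))⁻¹) '' Ω) := by
  have hpos : ∀ x ∈ closure Ω, (Matrix.of (A x)).PosDef := fun x hx =>
    posDef_of (hA x hx).1 (hA x hx).2.1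
  have hAG : ∀ x ∈ closure Ω, Matrix.of (A x) * Matrix.of (A x) = Matrix.of (G x) := fun x hx => by
    rw [← of_mmul, (hA x hx).2.2]
  have hunit : ∀ x ∈ closure Ω, IsUnit (Matrix.of (G x)).det := fun x hx => by
    rw [← hAG x hx]
    exact (Matrix.isUnit_iff_isUnit_det _).mp ((hpos x hx).isUnit.mul (hpos x hx).isUnit)
  exact (isBounded_inv_image_of_mul_self hΩb.isCompact_closure hG
    (fun x hx => (hpos x hx).isHermitian) hunit hAG).subset (Set.image_mono subset_closure)

theorem exists_rotation_norm_gradu_plateDeformation_sub_one_le {G A : E2 → M3} (hΩo : IsOpen Ω)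
    (hΩb : IsBounded Ω) (hG : ContinuousOn G (closure Ω)) (hy0 : DifferentiableOn ℝ y0 Ω)
    (hb0 : ContDiffOn ℝ 1 b0 (closure Ω))
    (hQ0 : ∀ x ∈ Ω, ∀ i j : Fin 3, dot3 (Qcol y0 b0 x i) (Qcol y0 b0 x j) = G x i j)
    (hQdet : ∀ x ∈ Ω, 0 < Qdet y0 b0 x)
    (hsym0 : ∀ x ∈ Ω, ∀ i j : Fin 2,
      dot3 (pdv i y0 x) (pdv j b0 x) + dot3 (pdv j y0 x) (pdv i b0 x) = 0)
    (hd0C1 : ContDiffOn ℝ 1 d0 (closure Ω))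
    (hd0 : ∀ x ∈ Ω,
      (∀ i : Fin 2, dot3 (Qcol y0 b0 x i.castSucc) (d0 x) = - dot3 (pdv i b0 x) (b0 x)) ∧
      dot3 (Qcol y0 b0 x 2) (d0 x) = 0)
    (hA : ∀ x ∈ closure Ω, SymM (A x) ∧ PosDefM (A x) ∧ mmul (A x) (A x) = G x) :
    ∃ κ > (0 : ℝ), ∀ x ∈ Ω, ∀ t : ℝ, ∃ R ∈ SO3,
      ‖Matrix.of (mmul R (mmul (gradu (plateDeformation y0 b0 d0) (x, t)) (minv (A x)))) - 1‖ ≤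
        κ * t ^ 2 := by
  obtain ⟨α, hα, hαA⟩ := (isBounded_inv_image_of_mmul_self hΩb hG hA).exists_pos_norm_le
  obtain ⟨β, hβ, hβB⟩ :=
    (isBounded_columnFrame_image hΩo hΩb hb0 hd0C1.continuousOn).exists_pos_norm_le
  obtain ⟨γ, hγ, hγD⟩ :=
    (isBounded_columnFrame_image hΩo hΩb hd0C1 continuous_zero.continuousOn).exists_pos_norm_le
  refine ⟨((β * α) ^ 2 + γ * α) / 2, by positivity, fun x hx t => ?_⟩
  obtain ⟨hAs, hAp, hAG⟩ := hA x (subset_closure hx)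
  have hAQ : Matrix.of (A x) * Matrix.of (A x) =
      star (columnFrame y0 b0 x) * columnFrame y0 b0 x := by
    ext i j
    rw [← of_mmul, hAG, star_columnFrame_mul_columnFrame_apply, hQ0 x hx i j, Matrix.of_apply]
  obtain ⟨R, hR, hle⟩ := exists_rotation_norm_mul_frame_sub_one_le (D := columnFrame d0 0 x)
    (posDef_of hAs hAp) hAQ (det_columnFrame ▸ hQdet x hx)
    (star_columnFrame_mul_columnFrame_mem_skewAdjoint (hsym0 x hx) (hd0 x hx).1 (hd0 x hx).2) t
  have hdiff {f : E2 → V3} (hf : ContDiffOn ℝ 1 f (closure Ω)) : DifferentiableAt ℝ f x :=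
    ((hf.mono subset_closure).contDiffAt (hΩo.mem_nhds hx)).differentiableAt one_ne_zero
  refine ⟨Matrix.of.symm R, mem_SO3_iff.mpr hR, ?_⟩
  rw [of_mmul, of_mmul, of_minv, Equiv.apply_symm_apply,
    of_gradu_plateDeformation t (hy0.differentiableAt (hΩo.mem_nhds hx)) (hdiff hb0) (hdiff hd0C1)]
  grw [hle, hαA _ (Set.mem_image_of_mem _ hx), hβB _ (Set.mem_image_of_mem _ hx),
    hγD _ (Set.mem_image_of_mem _ hx)]
  exact le_of_eq (by ring)

end Plate

theorem stmt0_general {Ω : Set E2} (hΩo : IsOpen Ω) (hΩb : IsBounded Ω)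
    {G : E2 → M3} (hG : ContinuousOn G (closure Ω))
    {y0 : E2 → V3} (hy0 : DifferentiableOn ℝ y0 Ω)
    {b0 : E2 → V3} (hb0 : ContDiffOn ℝ 1 b0 (closure Ω))
    (hQ0 : ∀ x ∈ Ω, ∀ i j : Fin 3, dot3 (Qcol y0 b0 x i) (Qcol y0 b0 x j) = G x i j)
    (hQdet : ∀ x ∈ Ω, 0 < Qdet y0 b0 x)
    (hsym0 : ∀ x ∈ Ω, ∀ i j : Fin 2,
      dot3 (pdv i y0 x) (pdv j b0 x) + dot3 (pdv j y0 x) (pdv i b0 x) = 0)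
    {d0 : E2 → V3} (hd0C1 : ContDiffOn ℝ 1 d0 (closure Ω))
    (hd0 : ∀ x ∈ Ω,
      (∀ i : Fin 2, dot3 (Qcol y0 b0 x i.castSucc) (d0 x) = - dot3 (pdv i b0 x) (b0 x)) ∧
      dot3 (Qcol y0 b0 x 2) (d0 x) = 0)
    {A : E2 → M3}
    (hA : ∀ x ∈ closure Ω, SymM (A x) ∧ PosDefM (A x) ∧ mmul (A x) (A x) = G x)
    {W : M3 → ℝ≥0∞} (hW0 : W idm = 0) (hWfr : ∀ R ∈ SO3, ∀ F : M3, W (mmul R F) = W F)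
    {Wr : M3 → ℝ} (hWrC2 : ContDiffAt ℝ 2 Wr idm) (hWr0 : ∀ᶠ F in 𝓝 idm, 0 ≤ Wr F)
    (hWrep : ∀ᶠ F in 𝓝 idm, W F = ENNReal.ofReal (Wr F)) :
    ∃ C > (0 : ℝ), ∃ h0 ∈ Set.Ioc (0 : ℝ) 1, ∀ h ∈ Set.Ioc (0 : ℝ) h0,
      Eh W A Ω h (plateDeformation y0 b0 d0) ≤ ENNReal.ofReal (C * h ^ 4) ∧
      (⨅ u : E2 × ℝ → V3, Eh W A Ω h u) ≤ ENNReal.ofReal (C * h ^ 4) := by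
  obtain ⟨L, hL, δ, hδ, hW⟩ := exists_le_sq_norm_sub_one hW0 hWrep hWrC2 hWr0
  obtain ⟨κ, hκ, hrot⟩ := exists_rotation_norm_gradu_plateDeformation_sub_one_le hΩo hΩb hG hy0 hb0
    hQ0 hQdet hsym0 hd0C1 hd0 hA
  obtain ⟨C, hC, h0, hh0, hE⟩ := exists_Eh_le_of_rotation_close hΩo hΩb hWfr hL hδ hW hκ hrot
  exact ⟨C, hC, h0, hh0, fun h hh => ⟨hE h hh, (iInf_le _ _).trans (hE h hh)⟩⟩

/-- The deformation `u^h = y₀ + x₃ b₀ + (x₃²/2) d₀` has energy `E^h(u^h) ≤ C h⁴`;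
in particular `inf E^h ≤ C h⁴`. -/
theorem stmt0
    (Ω : Set E2) (hΩo : IsOpen Ω) (hΩb : Bornology.IsBounded Ω)
    (hΩsc : SimplyConnectedSpace ↥Ω)
    (G : E2 → M3) (hGsm : ContDiffOn ℝ (⊤ : ℕ∞) G (closure Ω))
    (hGsym : ∀ x ∈ closure Ω, SymM (G x)) (hGpos : ∀ x ∈ closure Ω, PosDefM (G x))
    (y0 : E2 → V3) (hy0sm : ContDiffOn ℝ (⊤ : ℕ∞) y0 (closure Ω))
    (himm : ∀ x ∈ Ω, ∀ i j : Fin 2,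
      dot3 (pdv i y0 x) (pdv j y0 x) = G x i.castSucc j.castSucc)
    (b0 : E2 → V3) (hb0sm : ContDiffOn ℝ (⊤ : ℕ∞) b0 (closure Ω))
    (hQ0 : ∀ x ∈ Ω, ∀ i j : Fin 3,
      dot3 (Qcol y0 b0 x i) (Qcol y0 b0 x j) = G x i j)
    (hQdet : ∀ x ∈ Ω, 0 < Qdet y0 b0 x)
    (hsym0 : ∀ x ∈ Ω, ∀ i j : Fin 2,
      dot3 (pdv i y0 x) (pdv j b0 x) + dot3 (pdv j y0 x) (pdv i b0 x) = 0)
    (d0 : E2 → V3) (hd0sm : ContDiffOn ℝ (⊤ : ℕ∞) d0 (closure Ω))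
    (hd0 : ∀ x ∈ Ω,
      (∀ i : Fin 2, dot3 (Qcol y0 b0 x i.castSucc) (d0 x) = - dot3 (pdv i b0 x) (b0 x)) ∧
      dot3 (Qcol y0 b0 x 2) (d0 x) = 0)
    (A : E2 → M3)
    (hA : ∀ x ∈ closure Ω, SymM (A x) ∧ PosDefM (A x) ∧ mmul (A x) (A x) = G x)
    (W : M3 → ℝ≥0∞) (c : ℝ) (hc : 0 < c)
    (hW0 : ∀ R ∈ SO3, W R = 0)
    (hWfr : ∀ R ∈ SO3, ∀ F : M3, W (mmul R F) = W F)
    (hWgrow : ∀ F : M3, ENNReal.ofReal (c * Metric.infDist F SO3 ^ 2) ≤ W F)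
    (U : Set M3) (hUopen : IsOpen U) (hUSO3 : SO3 ⊆ U)
    (Wr : M3 → ℝ) (hWrC2 : ContDiffOn ℝ 2 Wr U)
    (hWrep : ∀ F ∈ U, W F = ENNReal.ofReal (Wr F))
 :
    ∃ C > (0 : ℝ), ∃ h0 ∈ Set.Ioc (0 : ℝ) 1, ∀ h ∈ Set.Ioc (0 : ℝ) h0,
      Eh W A Ω h
        (fun x : E2 × ℝ => fun a =>
          y0 x.1 a + x.2 * b0 x.1 a + x.2 ^ 2 / 2 * d0 x.1 a) ≤
        ENNReal.ofReal (C * h ^ 4) ∧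
      (⨅ u : E2 × ℝ → V3, Eh W A Ω h u) ≤ ENNReal.ofReal (C * h ^ 4) := by
  have hUid : U ∈ 𝓝 idm := hUopen.mem_nhds (hUSO3 idm_mem_SO3)
  have hWr0 : ∀ F ∈ U, 0 ≤ Wr F := fun F hF =>
    nonneg_of_infDist_SO3_growth hc hWgrow hUopen hWrC2.continuousOn hWrep hF
  have hC1 {f : E2 → V3} (hf : ContDiffOn ℝ (⊤ : ℕ∞) f (closure Ω)) :
      ContDiffOn ℝ 1 f (closure Ω) := hf.of_le (by simp)
  exact stmt0_general hΩo hΩb hGsm.continuousOn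
    ((hC1 hy0sm).differentiableOn one_ne_zero |>.mono subset_closure) (hC1 hb0sm) hQ0 hQdet hsym0
    (hC1 hd0sm) hd0 hA (hW0 idm idm_mem_SO3) hWfr (hWrC2.contDiffAt hUid)
    (Filter.mem_of_superset hUid hWr0) (Filter.mem_of_superset hUid hWrep)
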